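/- The function R satisfies a ΔR − ∇a · ∇R = (n−2) a (∇a · ∇u) at every point of U; that is, a Σ_{i=1}^n ∂_{ii}R − Σ_{i=1}^n (∂_i a)(∂_i R) = (n−2) a Σ_{i=1}^n (∂_i a)(∂_i u). -/

import Mathlib

/-- Partial derivative in direction `i` of a function on `ℝⁿ`. -/
noncomputable def pd {n : ℕ} (i : Fin n) (f : EuclideanSpace ℝ (Fin n) → ℝ)
    (x : EuclideanSpace ℝ (Fin n)) : ℝ :=
  fderiv ℝ f x (EuclideanSpace.single i 1)

/-!
Write `L_a u = a Δu + ∇a · ∇u = div (a ∇u)` and `E = ∑ x_k ∂_k`. Since `[∂_i, E] = ∂_i`,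
differentiating the equation along dilations gives `L_a (E u) = E (L_a u) + 2 L_a u - L_{E a} u`,
which is `-L_{E a} u` when `L_a u = 0`. If `a` is radial, then
`∇(E a) = (Δa) x - (n - 2) ∇a` and `(E a) ∇a · ∇u = |∇a|² E u`, so `a L_a (E u)` equals
`(|∇a|² - a Δa) E u + (n - 2) a ∇a · ∇u`. Expanding `a Δ(a v) - ∇a · ∇(a v)` as
`a L_a v + (a Δa - |∇a|²) v` with `v = E u`, the terms in `E u` cancel.
-/

open Filter Topology

theorem fderiv_fderiv_apply_self {E F : Type*} [NormedAddCommGroup E] [NormedSpace ℝ E]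
    [NormedAddCommGroup F] [NormedSpace ℝ F] {f : E → F} {x : E} (hf : ContDiffAt ℝ 2 f x)
    (v : E) :
    fderiv ℝ (fun y ↦ fderiv ℝ f y y) x v =
      fderiv ℝ f x v + fderiv ℝ (fun y ↦ fderiv ℝ f y v) x x := by
  have hf' : DifferentiableAt ℝ (fderiv ℝ f) x :=
    (hf.fderiv_right one_add_one_eq_two.le).differentiableAt one_ne_zero
  have hsymm : fderiv ℝ (fderiv ℝ f) x v x = fderiv ℝ (fderiv ℝ f) x x v :=
    hf.isSymmSndFDerivAt (by simp) v x
  rw [fderiv_clm_apply hf' differentiableAt_fun_id,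
    fderiv_clm_apply hf' (differentiableAt_const v)]
  simp [hsymm]

section RadialConductivity

variable {n : ℕ} {f g a u v : EuclideanSpace ℝ (Fin n) → ℝ} {x : EuclideanSpace ℝ (Fin n)}

section PartialDerivatives

theorem pd_congr (h : f =ᶠ[𝓝 x] g) (i : Fin n) : pd i f x = pd i g x := by
  simp only [pd, h.fderiv_eq]

theorem pd_add (hf : DifferentiableAt ℝ f x) (hg : DifferentiableAt ℝ g x) (i : Fin n) :
    pd i (f + g) x = pd i f x + pd i g x := by
  simp only [pd, fderiv_add hf hg, add_apply]

theorem pd_mul (hf : DifferentiableAt ℝ f x) (hg : DifferentiableAt ℝ g x) (i : Fin n) :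
    pd i (f * g) x = f x * pd i g x + g x * pd i f x := by
  simp only [pd, fderiv_mul hf hg, add_apply, smul_apply, smul_eq_mul]

theorem pd_coord_mul (hf : DifferentiableAt ℝ f x) (i j : Fin n) :
    pd i (fun y ↦ y j * f y) x = x j * pd i f x + if j = i then f x else 0 := by
  have hcoord : HasFDerivAt (fun y : EuclideanSpace ℝ (Fin n) ↦ y j)
      (EuclideanSpace.proj (𝕜 := ℝ) j) x := (EuclideanSpace.proj (𝕜 := ℝ) j).hasFDerivAt
  simp [pd, (hcoord.fun_mul hf.hasFDerivAt).fderiv]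

theorem contDiffAt_pd {m k : WithTop ℕ∞} (hf : ContDiffAt ℝ k f x) (hmk : m + 1 ≤ k)
    (i : Fin n) : ContDiffAt ℝ m (pd i f) x :=
  (hf.fderiv_right hmk).clm_apply contDiffAt_const

theorem differentiableAt_pd (hf : ContDiffAt ℝ 2 f x) (i : Fin n) :
    DifferentiableAt ℝ (pd i f) x :=
  (contDiffAt_pd hf one_add_one_eq_two.le i).differentiableAt one_ne_zero

theorem differentiableAt_pd_pd (hf : ContDiffAt ℝ 3 f x) (i j : Fin n) :
    DifferentiableAt ℝ (pd i (pd j f)) x :=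
  differentiableAt_pd (contDiffAt_pd hf two_add_one_eq_three.le j) i

theorem pd_pd_mul (hf : ContDiffAt ℝ 2 f x) (hg : ContDiffAt ℝ 2 g x) (i : Fin n) :
    pd i (pd i (f * g)) x =
      f x * pd i (pd i g) x + 2 * (pd i f x * pd i g x) + g x * pd i (pd i f) x := by
  have hpd : pd i (f * g) =ᶠ[𝓝 x] f * pd i g + g * pd i f := by
    filter_upwards [hf.eventually (by simp), hg.eventually (by simp)] with y hfy hgy
    exact pd_mul (hfy.differentiableAt two_ne_zero) (hgy.differentiableAt two_ne_zero) i
  have hf₁ := hf.differentiableAt two_ne_zero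
  have hg₁ := hg.differentiableAt two_ne_zero
  have hf₂ := differentiableAt_pd hf i
  have hg₂ := differentiableAt_pd hg i
  rw [pd_congr hpd, pd_add (hf₁.mul hg₂) (hg₁.mul hf₂), pd_mul hf₁ hg₂, pd_mul hg₁ hf₂]
  ring

end PartialDerivatives

section Operators

/-- The Laplacian `Δf` of a function on `ℝⁿ`, as the sum of its pure second partial derivatives
`pd i (pd i f)`. -/
noncomputable def coordLaplacian (f : EuclideanSpace ℝ (Fin n) → ℝ)
    (x : EuclideanSpace ℝ (Fin n)) : ℝ :=
  ∑ i, pd i (pd i f) x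

/-- The product `∇f · ∇g` of the gradients of two functions on `ℝⁿ`, in coordinates. -/
noncomputable def gradDot (f g : EuclideanSpace ℝ (Fin n) → ℝ)
    (x : EuclideanSpace ℝ (Fin n)) : ℝ :=
  ∑ i, pd i f x * pd i g x

/-- The Euler derivative `x · ∇f`, the derivative of `f` along the generator of dilations. -/
noncomputable def eulerDeriv (f : EuclideanSpace ℝ (Fin n) → ℝ)
    (x : EuclideanSpace ℝ (Fin n)) : ℝ :=
  ∑ k, x k * pd k f x

/-- The operator `div (a ∇u)` with conductivity `a`, in the non-divergence form
`a Δu + ∇a · ∇u`. -/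
noncomputable def divGrad (a u : EuclideanSpace ℝ (Fin n) → ℝ)
    (x : EuclideanSpace ℝ (Fin n)) : ℝ :=
  a x * coordLaplacian u x + gradDot a u x

theorem coordLaplacian_mul (hf : ContDiffAt ℝ 2 f x) (hg : ContDiffAt ℝ 2 g x) :
    coordLaplacian (f * g) x =
      f x * coordLaplacian g x + 2 * gradDot f g x + g x * coordLaplacian f x := by
  simp only [coordLaplacian, gradDot, pd_pd_mul hf hg, Finset.sum_add_distrib, Finset.mul_sum]

theorem gradDot_mul_right (hf : DifferentiableAt ℝ f x) (hg : DifferentiableAt ℝ g x) :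
    gradDot a (f * g) x = f x * gradDot a g x + g x * gradDot a f x := by
  simp only [gradDot, pd_mul hf hg, Finset.mul_sum, ← Finset.sum_add_distrib]
  exact Finset.sum_congr rfl fun i _ ↦ by ring

theorem mul_coordLaplacian_mul_sub_gradDot_mul (ha : ContDiffAt ℝ 2 a x)
    (hv : ContDiffAt ℝ 2 v x) :
    a x * coordLaplacian (a * v) x - gradDot a (a * v) x =
      a x * divGrad a v x + (a x * coordLaplacian a x - gradDot a a x) * v x := by
  rw [coordLaplacian_mul ha hv,
    gradDot_mul_right (ha.differentiableAt two_ne_zero) (hv.differentiableAt two_ne_zero),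
    divGrad]
  ring

end Operators

section EulerDerivative

theorem eulerDeriv_eq_fderiv (f : EuclideanSpace ℝ (Fin n) → ℝ)
    (x : EuclideanSpace ℝ (Fin n)) : eulerDeriv f x = fderiv ℝ f x x := by
  have hx : ∑ k, x k • EuclideanSpace.single k (1 : ℝ) = x := by
    simpa using (EuclideanSpace.basisFun (Fin n) ℝ).sum_repr x
  conv_rhs => rw [← hx, map_sum]
  simp [eulerDeriv, pd, hx]

theorem contDiffAt_eulerDeriv {m k : WithTop ℕ∞} (hf : ContDiffAt ℝ k f x) (hmk : m + 1 ≤ k) :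
    ContDiffAt ℝ m (eulerDeriv f) x := by
  rw [funext (eulerDeriv_eq_fderiv f)]
  exact (hf.fderiv_right hmk).clm_apply contDiffAt_id

theorem eulerDeriv_congr (h : f =ᶠ[𝓝 x] g) : eulerDeriv f x = eulerDeriv g x := by
  simp only [eulerDeriv_eq_fderiv, h.fderiv_eq]

theorem eulerDeriv_zero : eulerDeriv (0 : EuclideanSpace ℝ (Fin n) → ℝ) x = 0 := by
  simp [eulerDeriv_eq_fderiv]

theorem eulerDeriv_add (hf : DifferentiableAt ℝ f x) (hg : DifferentiableAt ℝ g x) :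
    eulerDeriv (f + g) x = eulerDeriv f x + eulerDeriv g x := by
  simp only [eulerDeriv_eq_fderiv, fderiv_add hf hg, add_apply]

theorem eulerDeriv_mul (hf : DifferentiableAt ℝ f x) (hg : DifferentiableAt ℝ g x) :
    eulerDeriv (f * g) x = f x * eulerDeriv g x + g x * eulerDeriv f x := by
  simp only [eulerDeriv_eq_fderiv, fderiv_mul hf hg, add_apply, smul_apply, smul_eq_mul]

theorem eulerDeriv_sum {ι : Type*} {s : Finset ι} {F : ι → EuclideanSpace ℝ (Fin n) → ℝ}
    (hF : ∀ i ∈ s, DifferentiableAt ℝ (F i) x) :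
    eulerDeriv (fun y ↦ ∑ i ∈ s, F i y) x = ∑ i ∈ s, eulerDeriv (F i) x := by
  simp only [eulerDeriv_eq_fderiv, fderiv_fun_sum hF, sum_apply]

theorem pd_eulerDeriv (hf : ContDiffAt ℝ 2 f x) (i : Fin n) :
    pd i (eulerDeriv f) x = pd i f x + eulerDeriv (pd i f) x := by
  rw [eulerDeriv_eq_fderiv (pd i f), funext (eulerDeriv_eq_fderiv f)]
  exact fderiv_fderiv_apply_self hf _

theorem pd_pd_eulerDeriv (hf : ContDiffAt ℝ 3 f x) (i : Fin n) :
    pd i (pd i (eulerDeriv f)) x = eulerDeriv (pd i (pd i f)) x + 2 * pd i (pd i f) x := by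
  have hpd : pd i (eulerDeriv f) =ᶠ[𝓝 x] pd i f + eulerDeriv (pd i f) := by
    filter_upwards [hf.eventually (by simp)] with y hfy
    exact pd_eulerDeriv (hfy.of_le (by norm_num)) i
  have hf' : ContDiffAt ℝ 2 (pd i f) x := contDiffAt_pd hf two_add_one_eq_three.le i
  rw [pd_congr hpd, pd_add (hf'.differentiableAt two_ne_zero)
    ((contDiffAt_eulerDeriv hf' one_add_one_eq_two.le).differentiableAt one_ne_zero),
    pd_eulerDeriv hf']
  ring

theorem coordLaplacian_eulerDeriv (hf : ContDiffAt ℝ 3 f x) :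
    coordLaplacian (eulerDeriv f) x =
      eulerDeriv (coordLaplacian f) x + 2 * coordLaplacian f x := by
  have hsum : eulerDeriv (coordLaplacian f) x = ∑ i, eulerDeriv (pd i (pd i f)) x :=
    eulerDeriv_sum fun i _ ↦ differentiableAt_pd_pd hf i i
  simp only [hsum, coordLaplacian, pd_pd_eulerDeriv hf, Finset.sum_add_distrib, Finset.mul_sum]

theorem eulerDeriv_gradDot (hf : ContDiffAt ℝ 2 f x) (hg : ContDiffAt ℝ 2 g x) :
    eulerDeriv (gradDot f g) x =
      gradDot (eulerDeriv f) g x + gradDot f (eulerDeriv g) x - 2 * gradDot f g x := by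
  have hf' := differentiableAt_pd hf
  have hg' := differentiableAt_pd hg
  have hsum : eulerDeriv (gradDot f g) x = ∑ i, eulerDeriv (pd i f * pd i g) x :=
    eulerDeriv_sum fun i _ ↦ (hf' i).mul (hg' i)
  simp only [hsum, gradDot, eulerDeriv_mul (hf' _) (hg' _), pd_eulerDeriv hf, pd_eulerDeriv hg,
    Finset.mul_sum, ← Finset.sum_add_distrib, ← Finset.sum_sub_distrib]
  exact Finset.sum_congr rfl fun i _ ↦ by ring

theorem differentiableAt_coordLaplacian (hf : ContDiffAt ℝ 3 f x) :
    DifferentiableAt ℝ (coordLaplacian f) x :=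
  .fun_sum fun i _ ↦ differentiableAt_pd_pd hf i i

theorem differentiableAt_gradDot (hf : ContDiffAt ℝ 2 f x) (hg : ContDiffAt ℝ 2 g x) :
    DifferentiableAt ℝ (gradDot f g) x :=
  .fun_sum fun i _ ↦ (differentiableAt_pd hf i).mul (differentiableAt_pd hg i)

theorem divGrad_eulerDeriv (ha : ContDiffAt ℝ 2 a x) (hu : ContDiffAt ℝ 3 u x) :
    divGrad a (eulerDeriv u) x =
      eulerDeriv (divGrad a u) x + 2 * divGrad a u x - divGrad (eulerDeriv a) u x := by
  have hu₂ : ContDiffAt ℝ 2 u x := hu.of_le (by norm_num)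
  have ha₁ := ha.differentiableAt two_ne_zero
  have hΔu := differentiableAt_coordLaplacian hu
  have hleibniz : eulerDeriv (divGrad a u) x =
      a x * eulerDeriv (coordLaplacian u) x + coordLaplacian u x * eulerDeriv a x +
        eulerDeriv (gradDot a u) x := by
    rw [← eulerDeriv_mul ha₁ hΔu]
    exact eulerDeriv_add (ha₁.mul hΔu) (differentiableAt_gradDot ha hu₂)
  rw [hleibniz, eulerDeriv_gradDot ha hu₂]
  simp only [divGrad, coordLaplacian_eulerDeriv hu]
  ring

end EulerDerivative

section Radial

/-- Infinitesimal radiality at `x`: the gradient of `a` at `x` is parallel to `x`, in the sense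
that all rotational derivatives `x_j ∂_k a - x_k ∂_j a` vanish there. -/
def IsRadialAt (a : EuclideanSpace ℝ (Fin n) → ℝ) (x : EuclideanSpace ℝ (Fin n)) : Prop :=
  ∀ j k, x j * pd k a x - x k * pd j a x = 0

theorem IsRadialAt.eulerDeriv_mul_gradDot (ha : IsRadialAt a x)
    (u : EuclideanSpace ℝ (Fin n) → ℝ) :
    eulerDeriv a x * gradDot a u x = gradDot a a x * eulerDeriv u x := by
  simp only [eulerDeriv, gradDot, Finset.sum_mul_sum]
  refine Finset.sum_congr rfl fun k _ ↦ Finset.sum_congr rfl fun i _ ↦ ?_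
  linear_combination pd k a x * pd i u x * ha k i

theorem eulerDeriv_pd_of_isRadialAt (ha : ContDiffAt ℝ 2 a x)
    (hrad : ∀ᶠ y in 𝓝 x, IsRadialAt a y) (j : Fin n) :
    eulerDeriv (pd j a) x = x j * coordLaplacian a x - (n - 1) * pd j a x := by
  have hpd : ∀ k, x j * pd k (pd k a) x + (if j = k then pd k a x else 0) =
      x k * pd k (pd j a) x + pd j a x := fun k ↦ by
    have hjk : (fun y ↦ y j * pd k a y) =ᶠ[𝓝 x] fun y ↦ y k * pd j a y :=
      hrad.mono fun y hy ↦ sub_eq_zero.1 (hy j k)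
    simpa [pd_coord_mul (differentiableAt_pd ha _)] using pd_congr hjk k
  have hsum : x j * coordLaplacian a x + pd j a x = eulerDeriv (pd j a) x + n * pd j a x := by
    simpa [coordLaplacian, eulerDeriv, Finset.sum_add_distrib, ← Finset.mul_sum] using
      Finset.sum_congr (s₁ := Finset.univ) rfl fun k _ ↦ hpd k
  linear_combination -hsum

theorem pd_eulerDeriv_of_isRadialAt (ha : ContDiffAt ℝ 2 a x)
    (hrad : ∀ᶠ y in 𝓝 x, IsRadialAt a y) (j : Fin n) :
    pd j (eulerDeriv a) x = x j * coordLaplacian a x - (n - 2) * pd j a x := by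
  rw [pd_eulerDeriv ha, eulerDeriv_pd_of_isRadialAt ha hrad]
  ring

theorem gradDot_eulerDeriv_of_isRadialAt (ha : ContDiffAt ℝ 2 a x)
    (hrad : ∀ᶠ y in 𝓝 x, IsRadialAt a y) (u : EuclideanSpace ℝ (Fin n) → ℝ) :
    gradDot (eulerDeriv a) u x =
      coordLaplacian a x * eulerDeriv u x - (n - 2) * gradDot a u x := by
  simp only [gradDot, eulerDeriv, pd_eulerDeriv_of_isRadialAt ha hrad, Finset.mul_sum,
    ← Finset.sum_sub_distrib]
  exact Finset.sum_congr rfl fun j _ ↦ by ring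

end Radial

theorem stmt10_general (ha : ContDiffAt ℝ 2 a x) (hu : ContDiffAt ℝ 3 u x)
    (hrad : ∀ᶠ y in 𝓝 x, IsRadialAt a y) (heq : ∀ᶠ y in 𝓝 x, divGrad a u y = 0) :
    a x * coordLaplacian (a * eulerDeriv u) x - gradDot a (a * eulerDeriv u) x =
      (n - 2) * a x * gradDot a u x := by
  have hEu : ContDiffAt ℝ 2 (eulerDeriv u) x :=
    contDiffAt_eulerDeriv hu two_add_one_eq_three.le
  have heq_x : divGrad a u x = 0 := heq.self_of_nhds
  have hE_eq : eulerDeriv (divGrad a u) x = 0 := (eulerDeriv_congr heq).trans eulerDeriv_zero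
  have hdilation : divGrad a (eulerDeriv u) x = -divGrad (eulerDeriv a) u x := by
    rw [divGrad_eulerDeriv ha hu, heq_x, hE_eq]
    ring
  have hEa : divGrad (eulerDeriv a) u x = eulerDeriv a x * coordLaplacian u x +
      (coordLaplacian a x * eulerDeriv u x - (n - 2) * gradDot a u x) := by
    rw [divGrad, gradDot_eulerDeriv_of_isRadialAt ha hrad]
  rw [mul_coordLaplacian_mul_sub_gradDot_mul ha hEu, hdilation, hEa]
  rw [divGrad] at heq_x
  linear_combination hrad.self_of_nhds.eulerDeriv_mul_gradDot u - eulerDeriv a x * heq_x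

end RadialConductivity

/-- Section 5: the quantity `R = a ∑ x_k ∂_k u` satisfies
`a ΔR − ∇a · ∇R = (n−2) a (∇a · ∇u)` on `U`, in any dimension `n ≥ 2`. -/
theorem stmt10 (n : ℕ) (hn : 2 ≤ n)
    (U : Set (EuclideanSpace ℝ (Fin n))) (hU : IsOpen U)
    (a u : EuclideanSpace ℝ (Fin n) → ℝ)
    (ha : ContDiffOn ℝ (⊤ : ℕ∞) a U) (hapos : ∀ x ∈ U, 0 < a x)
    (hrad : ∀ (j k : Fin n), ∀ x ∈ U, x j * pd k a x - x k * pd j a x = 0)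
    (hu : ContDiffOn ℝ (⊤ : ℕ∞) u U)
    (heq : ∀ x ∈ U, a x * (∑ i, pd i (pd i u) x) + ∑ i, pd i a x * pd i u x = 0)
    (R : EuclideanSpace ℝ (Fin n) → ℝ)
    (hR : ∀ x, R x = a x * ∑ k, x k * pd k u x) :
    ∀ x ∈ U,
      a x * (∑ i, pd i (pd i R) x) - ∑ i, pd i a x * pd i R x
        = ((n : ℝ) - 2) * a x * ∑ i, pd i a x * pd i u x := by
  intro x hx
  have hUx : U ∈ 𝓝 x := hU.mem_nhds hx
  obtain rfl : R = a * eulerDeriv u := funext hR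
  exact stmt10_general ((ha.contDiffAt hUx).of_le ENat.LEInfty.out)
    ((hu.contDiffAt hUx).of_le ENat.LEInfty.out)
    (mem_of_superset hUx fun y hy j k ↦ hrad j k y hy) (mem_of_superset hUx heq)
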